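/- arXiv:2412.12987 — 5 statements merged into one kernel-verified Lean document; each statement's English description precedes it below -/
import Mathlib

section
/- Let μ > 0 and suppose the pair (x, λ) ∈ Ω° × ℝ^m satisfies ‖∇φ_μ(x) + Aᵀλ‖_x^* ≤ μ. Then, setting λ̃ = λ/(1+μ), the point x satisfies the approximate first-order optimality conditions: x ∈ int K, Ax = b, ∇f(x) + Aᵀλ̃ ∈ K^*, and ‖∇f(x) + Aᵀλ̃‖_x^* ≤ ε for every ε ≥ (1+√ϑ)μ. -/
open Matrix MeasureTheory ProbabilityTheory

noncomputable section

/-- The local norm `‖v‖ₓ = (vᵀ ∇²B(x) v)^{1/2}` induced by `H = ∇²B(x)`. -/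
def locNorm {n : ℕ} (H : Matrix (Fin n) (Fin n) ℝ) (v : Fin n → ℝ) : ℝ :=
  Real.sqrt (v ⬝ᵥ (H *ᵥ v))

/-- The dual local norm `‖v‖ₓ* = (vᵀ ∇²B(x)⁻¹ v)^{1/2}`. -/
def dualNorm {n : ℕ} (H : Matrix (Fin n) (Fin n) ℝ) (v : Fin n → ℝ) : ℝ :=
  Real.sqrt (v ⬝ᵥ (H⁻¹ *ᵥ v))

/-- The induced local norm of a matrix: `‖M‖ₓ* = max_{‖v‖ₓ ≤ 1} ‖M v‖ₓ*`. -/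
def matDualNorm {n : ℕ} (H M : Matrix (Fin n) (Fin n) ℝ) : ℝ :=
  sSup ((fun v => dualNorm H (M *ᵥ v)) '' {v | locNorm H v ≤ 1})

/-- The strictly feasible region `Ω° = {x ∈ int 𝒦 : A x = b}`. -/
def strictFeas {n m : ℕ} (Kc : Set (Fin n → ℝ)) (A : Matrix (Fin m) (Fin n) ℝ)
    (b : Fin m → ℝ) : Set (Fin n → ℝ) :=
  {x | x ∈ interior Kc ∧ A *ᵥ x = b}

/-- The perturbed barrier function `φ_μ(x) = f(x) + μ (f(x) + B(x))`. -/
def phiMu {n : ℕ} (f Bf : (Fin n → ℝ) → ℝ) (μ : ℝ) (x : Fin n → ℝ) : ℝ :=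
  f x + μ * (f x + Bf x)

/-- The gradient of `φ_μ`: `∇φ_μ(x) = (1+μ) ∇f(x) + μ ∇B(x)`. -/
def gradPhiMu {n : ℕ} (Gf gradB : (Fin n → ℝ) → Fin n → ℝ) (μ : ℝ)
    (x : Fin n → ℝ) : Fin n → ℝ :=
  (1 + μ) • Gf x + μ • gradB x

/-- `Δ(x) = f(x) + [f(x)+B(x)]₊ − 2 [φ_low]₋`. -/
def DeltaFn {n : ℕ} (f Bf : (Fin n → ℝ) → ℝ) (philow : ℝ) (x : Fin n → ℝ) : ℝ :=
  f x + max (f x + Bf x) 0 - 2 * min philow 0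

/-- The σ-algebra generated by the samples `ξ⁰, …, ξᵏ`. -/
def sampleFilt {Θ Ξ : Type} [MeasurableSpace Ξ] (ξ : ℕ → Θ → Ξ) (k : ℕ) :
    MeasurableSpace Θ :=
  ⨆ i ∈ Finset.range (k + 1), MeasurableSpace.comap (ξ i) inferInstance

/-- The σ-algebra generated by the sample batches `𝓑₀, …, 𝓑ₖ`. -/
def batchFilt {Θ Ξ : Type} [MeasurableSpace Ξ] {Bsz : ℕ → ℕ}
    (ξ : (k : ℕ) → Fin (Bsz k) → Θ → Ξ) (k : ℕ) : MeasurableSpace Θ :=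
  ⨆ j ∈ Finset.range (k + 1), ⨆ i, MeasurableSpace.comap (ξ j i) inferInstance

/-!
With `g = ∇f(x) + Aᵀλ̃`, the residual decomposes as `∇φ_μ(x) + Aᵀλ = (1 + μ) g + μ ∇B(x)`.
Dividing it by `μ` puts `((1 + μ) / μ) g` within dual local distance one of `-∇B(x)`, where the
barrier guarantees membership in the cone `K^*`, so `g ∈ K^*`. The triangle inequality gives
`‖g‖ₓ* ≤ (1 + μ) ‖g‖ₓ* ≤ μ + μ ‖∇B(x)‖ₓ* ≤ (1 + √ϑ) μ`.
-/

section Seminorm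

variable {𝕜 E : Type*} [NormedField 𝕜] [AddCommGroup E]

theorem seminorm_le_add_of_one_le_norm [Module 𝕜 E] (p : Seminorm 𝕜 E) {c : 𝕜} (hc : 1 ≤ ‖c‖)
    (g u : E) : p g ≤ p (c • g + u) + p u :=
  calc p g ≤ ‖c‖ * p g := le_mul_of_one_le_left (apply_nonneg p g) hc
    _ = p ((c • g + u) - u) := by rw [add_sub_cancel_right, map_smul_eq_mul]
    _ ≤ p (c • g + u) + p u := map_sub_le_add p _ _

theorem mem_convexCone_of_seminorm_smul_add_smul_le [Module ℝ E] (p : Seminorm ℝ E)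
    {C : ConvexCone ℝ E} {w : E} (hball : {s | p (s + w) ≤ 1} ⊆ C) {c μ : ℝ} (hc : 0 < c)
    (hμ : 0 < μ) {g : E} (hg : p (c • g + μ • w) ≤ μ) : g ∈ C := by
  have rescale : μ⁻¹ • c • g + w = μ⁻¹ • (c • g + μ • w) := by
    rw [smul_add, inv_smul_smul₀ hμ.ne']
  have mem_ball : p (μ⁻¹ • c • g + w) ≤ 1 := by
    rw [rescale, map_smul_eq_mul, Real.norm_of_nonneg (inv_nonneg.mpr hμ.le)]
    exact inv_mul_le_one_of_le₀ hg hμ.le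
  exact (C.smul_mem_iff hc).mp ((C.smul_mem_iff (inv_pos.mpr hμ)).mp (hball mem_ball))

end Seminorm

section QuadraticForm

open scoped ComplexOrder

variable {ι 𝕜 : Type*} [Fintype ι] [RCLike 𝕜]

/-- The seminorm `v ↦ (vᴴ M v)^{1/2}` of a positive semidefinite matrix. It is bundled as a
`Seminorm` because `ι → 𝕜` already carries the supremum norm as its `Norm` instance. -/
def posSemidefSeminorm {M : Matrix ι ι 𝕜} (hM : M.PosSemidef) : Seminorm 𝕜 (ι → 𝕜) :=
  letI := M.toSeminormedAddCommGroup hM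
  letI := M.toInnerProductSpace hM
  normSeminorm 𝕜 (ι → 𝕜)

theorem posSemidefSeminorm_apply {M : Matrix ι ι 𝕜} (hM : M.PosSemidef) (v : ι → 𝕜) :
    posSemidefSeminorm hM v = √(RCLike.re (star v ⬝ᵥ (M *ᵥ v))) := by
  rw [dotProduct_comm]
  rfl

theorem dualNorm_eq_posSemidefSeminorm {n : ℕ} {H : Matrix (Fin n) (Fin n) ℝ}
    (hH : H.PosSemidef) (v : Fin n → ℝ) : dualNorm H v = posSemidefSeminorm hH.inv v := by
  rw [posSemidefSeminorm_apply, star_trivial, RCLike.re_to_real, dualNorm]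

end QuadraticForm

section DualCone

variable {ι : Type*} [Fintype ι]

/-- The dual cone `K^*` of a set `K` of coordinate vectors, taken with respect to the dot product
so that no Euclidean structure on `ι → ℝ` is needed. -/
def dualCone (K : Set (ι → ℝ)) : PointedCone ℝ (ι → ℝ) :=
  PointedCone.dual (dotProductBilin ℝ ℝ) K

theorem mem_dualCone {K : Set (ι → ℝ)} {s : ι → ℝ} :
    s ∈ dualCone K ↔ ∀ y ∈ K, 0 ≤ s ⬝ᵥ y := by
  simp only [dualCone, PointedCone.mem_dual, dotProductBilin_apply_apply, dotProduct_comm s]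

end DualCone

theorem gradPhiMu_add_transpose_mulVec {n m : ℕ} (Gf gradB : (Fin n → ℝ) → Fin n → ℝ) {μ : ℝ}
    (hμ : 1 + μ ≠ 0) (x : Fin n → ℝ) (A : Matrix (Fin m) (Fin n) ℝ) (lam : Fin m → ℝ) :
    gradPhiMu Gf gradB μ x + Aᵀ *ᵥ lam =
      (1 + μ) • (Gf x + Aᵀ *ᵥ ((1 + μ)⁻¹ • lam)) + μ • gradB x := by
  rw [gradPhiMu, mulVec_smul, smul_add, smul_inv_smul₀ hμ, add_right_comm]

theorem stmt0_general {n m : ℕ} (K : Set (Fin n → ℝ)) (ϑ : ℝ)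
    (gradB : (Fin n → ℝ) → Fin n → ℝ) (hessB : (Fin n → ℝ) → Matrix (Fin n) (Fin n) ℝ)
    (A : Matrix (Fin m) (Fin n) ℝ) (f : (Fin n → ℝ) → ℝ) (Gf : (Fin n → ℝ) → Fin n → ℝ)
    (x : Fin n → ℝ) (hBpos : (hessB x).PosDef)
    (hf' : ∃ L : (Fin n → ℝ) →L[ℝ] ℝ, HasFDerivAt f L x ∧ ∀ v, L v = Gf x ⬝ᵥ v)
    (htheta : dualNorm (hessB x) (gradB x) ^ 2 ≤ ϑ)
    (hdualball : ∀ s, dualNorm (hessB x) (s + gradB x) ≤ 1 → ∀ y ∈ K, 0 ≤ s ⬝ᵥ y)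
    (μ : ℝ) (hμ : 0 < μ) (lam : Fin m → ℝ)
    (hbound : dualNorm (hessB x) (gradPhiMu Gf gradB μ x + Aᵀ *ᵥ lam) ≤ μ) :
    (∀ y ∈ K, 0 ≤ (Gf x + Aᵀ *ᵥ ((1 + μ)⁻¹ • lam)) ⬝ᵥ y) ∧
      dualNorm (hessB x) (Gf x + Aᵀ *ᵥ ((1 + μ)⁻¹ • lam)) ≤ (1 + √ϑ) * μ := by
  have one_add_pos : 0 < 1 + μ := by positivity
  have norm_gradB : dualNorm (hessB x) (gradB x) ≤ √ϑ := Real.le_sqrt_of_sq_le htheta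
  rw [gradPhiMu_add_transpose_mulVec Gf gradB one_add_pos.ne'] at hbound
  set g := Gf x + Aᵀ *ᵥ ((1 + μ)⁻¹ • lam)
  simp only [← mem_dualCone, dualNorm_eq_posSemidefSeminorm hBpos.posSemidef]
    at norm_gradB hdualball hbound ⊢
  set p := posSemidefSeminorm hBpos.posSemidef.inv
  refine ⟨mem_convexCone_of_seminorm_smul_add_smul_le p (C := dualCone K) hdualball one_add_pos
    hμ hbound, ?_⟩
  have one_le_norm : 1 ≤ ‖1 + μ‖ := by
    rw [Real.norm_of_nonneg one_add_pos.le]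
    exact le_add_of_nonneg_right hμ.le
  calc p g ≤ p ((1 + μ) • g + μ • gradB x) + p (μ • gradB x) :=
        seminorm_le_add_of_one_le_norm p one_le_norm g _
    _ ≤ μ + μ * √ϑ := by
        rw [map_smul_eq_mul p μ, Real.norm_of_nonneg hμ.le]
        gcongr
    _ = (1 + √ϑ) * μ := by ring

/-- **Lemma 1**: approximate optimality from the perturbed-barrier stationarity measure. -/
theorem stmt0 {n m : ℕ}
    (Kc : Set (Fin n → ℝ))
    (hKconv : Convex ℝ Kc) (hKclosed : IsClosed Kc)
    (hKcone : ∀ t : ℝ, 0 < t → ∀ x ∈ Kc, t • x ∈ Kc)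
    (hKpointed : ∀ x : Fin n → ℝ, x ∈ Kc → -x ∈ Kc → x = 0)
    (hKint : (interior Kc).Nonempty)
    (ϑ : ℝ) (hϑ : 1 ≤ ϑ)
    (Bf : (Fin n → ℝ) → ℝ) (gradB : (Fin n → ℝ) → Fin n → ℝ)
    (hessB : (Fin n → ℝ) → Matrix (Fin n) (Fin n) ℝ)
    (hBpos : ∀ x ∈ interior Kc, (hessB x).PosDef)
    (A : Matrix (Fin m) (Fin n) ℝ) (b : Fin m → ℝ) (hA : A.rank = m)
    (f : (Fin n → ℝ) → ℝ) (Gf : (Fin n → ℝ) → Fin n → ℝ)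
    (hf' : ∀ x ∈ strictFeas Kc A b, ∃ L : (Fin n → ℝ) →L[ℝ] ℝ,
      HasFDerivAt f L x ∧ ∀ v, L v = Gf x ⬝ᵥ v)
    -- LHSC barrier properties (assumed as hypotheses):
    (hthetaId : ∀ x ∈ interior Kc, (dualNorm (hessB x) (gradB x)) ^ 2 = ϑ)
    (hdualball : ∀ x ∈ interior Kc, ∀ s : Fin n → ℝ,
      dualNorm (hessB x) (s + gradB x) ≤ 1 → ∀ y ∈ Kc, 0 ≤ s ⬝ᵥ y)
    (μ : ℝ) (hμ : 0 < μ)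
    (x : Fin n → ℝ) (lam : Fin m → ℝ)
    (hx : x ∈ strictFeas Kc A b)
    (hbound : dualNorm (hessB x) (gradPhiMu Gf gradB μ x + Aᵀ *ᵥ lam) ≤ μ) :
    x ∈ interior Kc ∧ A *ᵥ x = b ∧
      (∀ y ∈ Kc, 0 ≤ (Gf x + Aᵀ *ᵥ ((1 + μ)⁻¹ • lam)) ⬝ᵥ y) ∧
      ∀ ε : ℝ, (1 + Real.sqrt ϑ) * μ ≤ ε →
        dualNorm (hessB x) (Gf x + Aᵀ *ᵥ ((1 + μ)⁻¹ • lam)) ≤ ε := by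
  have ⟨mem_dual, norm_le⟩ := stmt0_general Kc ϑ gradB hessB A f Gf x (hBpos x hx.1) (hf' x hx)
    (hthetaId x hx.1).le (hdualball x hx.1) μ hμ lam hbound
  exact ⟨hx.1, hx.2, mem_dual, fun _ hε => norm_le.trans hε⟩
end
end

section
/- Let {x^k} and {z^k} be generated by SIPM-EM with step sizes {η_k} ⊂ (0, s_η] and momentum parameters {γ_k} ⊂ (0,1] satisfying η_k/γ_k ≤ s_η for all k ≥ 0, where s_η ∈ (0,1). Then z^k ∈ Ω° for all k ≥ 0 (for every realization of the samples). -/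
open Matrix MeasureTheory ProbabilityTheory

noncomputable section

/-!
At `x ∈ Ω°` the multiplier `λ` is chosen so that `d = H⁻¹ (m + Aᵀ λ) / ‖m + Aᵀ λ‖ₓ*` lies in
`ker A`, and `d` has local norm one; by the Dikin property `x - t d ∈ Ω°` whenever `|t| < 1`. With
`t = η_k` this keeps the iterates `x^k` in `Ω°`. Extrapolation only rescales the step: `z^{k+1}`
lies on the same line, `z^{k+1} = x^k - (η_k / γ_k) d`, so the claim is the case `t = η_k / γ_k`.
-/

section LinearAlgebra

theorem vecMul_injective_of_rank_eq_card {ι κ F : Type*} [Fintype ι] [Fintype κ] [Field F]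
    {A : Matrix ι κ F} (hA : A.rank = Fintype.card ι) : Function.Injective A.vecMul := by
  rw [vecMul_injective_iff, linearIndependent_iff_card_eq_finrank_span, ← hA]
  exact A.rank_eq_finrank_span_row

theorem posDef_mul_mul_conjTranspose_of_rank_eq_card {ι κ 𝕜 : Type*} [Fintype ι] [Fintype κ]
    [Field 𝕜] [PartialOrder 𝕜] [StarRing 𝕜] {M : Matrix κ κ 𝕜} (hM : M.PosDef)
    {A : Matrix ι κ 𝕜} (hA : A.rank = Fintype.card ι) : (A * M * Aᴴ).PosDef :=
  hM.mul_mul_conjTranspose_same (vecMul_injective_of_rank_eq_card hA)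

theorem sub_smul_add_smul_sub_self {F V : Type*} [Field F] [AddCommGroup V] [Module F V]
    {γ : F} (hγ : γ ≠ 0) (η : F) (x d : V) :
    x - η • d + ((1 - γ) / γ) • (x - η • d - x) = x - (η / γ) • d := by
  match_scalars
  · ring
  · field_simp
    ring

end LinearAlgebra

section LocalNorms

variable {n : ℕ} {H : Matrix (Fin n) (Fin n) ℝ} {v : Fin n → ℝ}

theorem locNorm_smul (H : Matrix (Fin n) (Fin n) ℝ) (t : ℝ) (v : Fin n → ℝ) :
    locNorm H (t • v) = |t| * locNorm H v := by
  rw [locNorm, mulVec_smul, smul_dotProduct, dotProduct_smul, smul_smul, smul_eq_mul, ← sq,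
    Real.sqrt_mul (sq_nonneg t), Real.sqrt_sq_eq_abs, locNorm]

theorem locNorm_inv_mulVec (hH : IsUnit H) (v : Fin n → ℝ) :
    locNorm H (H⁻¹ *ᵥ v) = dualNorm H v := by
  rw [locNorm, mulVec_mulVec, mul_nonsing_inv H ((isUnit_iff_isUnit_det H).1 hH), one_mulVec,
    dotProduct_comm, dualNorm]

theorem dualNorm_pos (hH : H.PosDef) (hv : v ≠ 0) : 0 < dualNorm H v :=
  Real.sqrt_pos.2 (hH.inv.dotProduct_mulVec_pos hv)

/-- The steepest-ascent direction `H⁻¹ v / ‖v‖ₓ*` of the linear form `v` in the local norm of `H`,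
which Algorithm 1 follows backwards; it is `0` for `v = 0`. -/
def steepestDir (H : Matrix (Fin n) (Fin n) ℝ) (v : Fin n → ℝ) : Fin n → ℝ :=
  (dualNorm H v)⁻¹ • (H⁻¹ *ᵥ v)

theorem locNorm_steepestDir (hH : H.PosDef) (hv : v ≠ 0) : locNorm H (steepestDir H v) = 1 := by
  have hpos := dualNorm_pos hH hv
  rw [steepestDir, locNorm_smul, locNorm_inv_mulVec hH.isUnit, abs_of_pos (inv_pos.2 hpos),
    inv_mul_cancel₀ hpos.ne']

end LocalNorms

section FeasibleSteps

variable {n m : ℕ} {Kc : Set (Fin n → ℝ)} {H : Matrix (Fin n) (Fin n) ℝ}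
  {A : Matrix (Fin m) (Fin n) ℝ} {b : Fin m → ℝ} {x d : Fin n → ℝ}

/-- The multiplier `λ = -(A H⁻¹ Aᵀ)⁻¹ A H⁻¹ g`, which makes `H⁻¹ (g + Aᵀ λ)` tangent to the affine
constraint `A x = b`. -/
def dualMultiplier (H : Matrix (Fin n) (Fin n) ℝ) (A : Matrix (Fin m) (Fin n) ℝ)
    (g : Fin n → ℝ) : Fin m → ℝ :=
  -((A * H⁻¹ * Aᵀ)⁻¹ *ᵥ ((A * H⁻¹) *ᵥ g))

theorem mulVec_steepestDir_add_dualMultiplier (hAHA : IsUnit (A * H⁻¹ * Aᵀ)) (g : Fin n → ℝ) :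
    A *ᵥ steepestDir H (g + Aᵀ *ᵥ dualMultiplier H A g) = 0 := by
  have tangent : A *ᵥ (H⁻¹ *ᵥ (g + Aᵀ *ᵥ dualMultiplier H A g)) = 0 := by
    rw [mulVec_mulVec, mulVec_add, mulVec_mulVec, dualMultiplier, mulVec_neg, mulVec_mulVec,
      mul_nonsing_inv _ ((isUnit_iff_isUnit_det _).1 hAHA), one_mulVec, add_neg_cancel]
  rw [steepestDir, mulVec_smul, tangent, smul_zero]

theorem sub_smul_mem_strictFeas
    (hDikin : ∀ y : Fin n → ℝ, locNorm H (y - x) < 1 → y ∈ interior Kc)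
    (hx : A *ᵥ x = b) (hAd : A *ᵥ d = 0) (hd : locNorm H d ≤ 1) {t : ℝ} (ht : |t| < 1) :
    x - t • d ∈ strictFeas Kc A b := by
  refine ⟨hDikin _ ?_, ?_⟩
  · rw [sub_sub_cancel_left, ← neg_smul, locNorm_smul, abs_neg]
    exact (mul_le_of_le_one_right (abs_nonneg t) hd).trans_lt ht
  · rw [mulVec_sub, mulVec_smul, hAd, smul_zero, sub_zero, hx]

theorem sub_smul_steepestDir_mem_strictFeas (hH : H.PosDef)
    (hDikin : ∀ y : Fin n → ℝ, locNorm H (y - x) < 1 → y ∈ interior Kc)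
    (hA : A.rank = m) (hx : A *ᵥ x = b) {g : Fin n → ℝ}
    (hg : g + Aᵀ *ᵥ dualMultiplier H A g ≠ 0) {t : ℝ} (ht : |t| < 1) :
    x - t • steepestDir H (g + Aᵀ *ᵥ dualMultiplier H A g) ∈ strictFeas Kc A b :=
  have hAHA : (A * H⁻¹ * Aᵀ).PosDef :=
    posDef_mul_mul_conjTranspose_of_rank_eq_card hH.inv (hA.trans (Fintype.card_fin m).symm)
  sub_smul_mem_strictFeas hDikin hx (mulVec_steepestDir_add_dualMultiplier hAHA.isUnit g)
    (locNorm_steepestDir hH hg).le ht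

end FeasibleSteps

theorem stmt8_general {n m : ℕ} {Kc : Set (Fin n → ℝ)}
    {hessB : (Fin n → ℝ) → Matrix (Fin n) (Fin n) ℝ}
    (hBpos : ∀ x ∈ interior Kc, (hessB x).PosDef)
    (hDikin : ∀ x ∈ interior Kc, ∀ y : Fin n → ℝ,
      locNorm (hessB x) (y - x) < 1 → y ∈ interior Kc)
    {A : Matrix (Fin m) (Fin n) ℝ} {b : Fin m → ℝ} (hA : A.rank = m)
    {η γ : ℕ → ℝ} (hη : ∀ k, |η k| < 1) (hηγ : ∀ k, |η k| < |γ k|)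
    {x z g : ℕ → Fin n → ℝ} {lam : ℕ → Fin m → ℝ}
    (hx0 : x 0 ∈ strictFeas Kc A b) (hz0 : z 0 = x 0)
    (hz : ∀ k, z (k + 1) = x (k + 1) + ((1 - γ k) / γ k) • (x (k + 1) - x k))
    (hlam : ∀ k, lam k = dualMultiplier (hessB (x k)) A (g k))
    (hg : ∀ k, g k + Aᵀ *ᵥ lam k ≠ 0)
    (hx : ∀ k, x (k + 1) = x k -
      (η k / dualNorm (hessB (x k)) (g k + Aᵀ *ᵥ lam k)) •
        ((hessB (x k))⁻¹ *ᵥ (g k + Aᵀ *ᵥ lam k))) :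
    ∀ k, z k ∈ strictFeas Kc A b := by
  have x_step (k : ℕ) : x (k + 1) = x k - η k • steepestDir (hessB (x k)) (g k + Aᵀ *ᵥ lam k) := by
    rw [hx, steepestDir, smul_smul, div_eq_mul_inv]
  have feasible_step {k : ℕ} (hk : x k ∈ strictFeas Kc A b) {t : ℝ} (ht : |t| < 1) :
      x k - t • steepestDir (hessB (x k)) (g k + Aᵀ *ᵥ lam k) ∈ strictFeas Kc A b := by
    have hgk := hg k
    rw [hlam] at hgk ⊢
    exact sub_smul_steepestDir_mem_strictFeas (hBpos _ hk.1) (hDikin _ hk.1) hA hk.2 hgk ht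
  have x_mem (k : ℕ) : x k ∈ strictFeas Kc A b := by
    induction k with
    | zero => exact hx0
    | succ k ih => exact x_step k ▸ feasible_step ih (hη k)
  rintro (_ | k)
  · exact hz0 ▸ hx0
  · have hγpos : 0 < |γ k| := (abs_nonneg _).trans_lt (hηγ k)
    rw [hz, x_step, sub_smul_add_smul_sub_self (abs_pos.1 hγpos)]
    exact feasible_step (x_mem k) (by rw [abs_div]; exact (div_lt_one hγpos).2 (hηγ k))

/-- **Lemma 5** (SIPM-EM): the extrapolated points `z^k` are strictly feasible,
for every realization of the samples. -/
theorem stmt8 {n m : ℕ} {Ξ : Type}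
    (Kc : Set (Fin n → ℝ))
    (hKconv : Convex ℝ Kc) (hKclosed : IsClosed Kc)
    (hKcone : ∀ t : ℝ, 0 < t → ∀ x ∈ Kc, t • x ∈ Kc)
    (hKpointed : ∀ x : Fin n → ℝ, x ∈ Kc → -x ∈ Kc → x = 0)
    (hKint : (interior Kc).Nonempty)
    (Bf : (Fin n → ℝ) → ℝ) (gradB : (Fin n → ℝ) → Fin n → ℝ)
    (hessB : (Fin n → ℝ) → Matrix (Fin n) (Fin n) ℝ)
    (hBpos : ∀ x ∈ interior Kc, (hessB x).PosDef)
    (hDikin : ∀ x ∈ interior Kc, ∀ y : Fin n → ℝ,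
      locNorm (hessB x) (y - x) < 1 → y ∈ interior Kc)
    (A : Matrix (Fin m) (Fin n) ℝ) (b : Fin m → ℝ) (hA : A.rank = m)
    (sη : ℝ) (hsη0 : 0 < sη) (hsη1 : sη < 1)
    (G : (Fin n → ℝ) → Ξ → Fin n → ℝ)
    (ξ : ℕ → Ξ)
    (η γ μk : ℕ → ℝ)
    (hηpos : ∀ k, 0 < η k) (hηle : ∀ k, η k ≤ sη)
    (hγpos : ∀ k, 0 < γ k) (hγle : ∀ k, γ k ≤ 1)
    (hratio : ∀ k, η k / γ k ≤ sη)
    (hμpos : ∀ k, 0 < μk k) (hμle : ∀ k, μk k ≤ 1)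
    (x0 : Fin n → ℝ) (hx0mem : x0 ∈ strictFeas Kc A b)
    (x z mbar mk : ℕ → Fin n → ℝ) (lam : ℕ → Fin m → ℝ)
    (hx0 : x 0 = x0)
    (hz0 : z 0 = x0)
    (hzrec : ∀ k, z (k + 1) = x (k + 1) + ((1 - γ k) / γ k) • (x (k + 1) - x k))
    (hmbar0 : mbar 0 = G x0 (ξ 0))
    (hmbarrec : ∀ k, mbar (k + 1) =
      (1 - γ k) • mbar k + γ k • G (z (k + 1)) (ξ (k + 1)))
    (hmk : ∀ k, mk k = mbar k + μk k • (mbar k + gradB (x k)))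
    (hlam : ∀ k, lam k =
      -((A * (hessB (x k))⁻¹ * Aᵀ)⁻¹ *ᵥ ((A * (hessB (x k))⁻¹) *ᵥ mk k)))
    (hnz : ∀ k, mk k + Aᵀ *ᵥ lam k ≠ 0)
    (hstep : ∀ k, x (k + 1) = x k -
      (η k / dualNorm (hessB (x k)) (mk k + Aᵀ *ᵥ lam k)) •
        ((hessB (x k))⁻¹ *ᵥ (mk k + Aᵀ *ᵥ lam k))) :
    ∀ k : ℕ, z k ∈ strictFeas Kc A b := by
  have hηγ k : η k < γ k := (div_lt_one (hγpos k)).1 ((hratio k).trans_lt hsη1)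
  exact stmt8_general hBpos hDikin hA (fun k ↦ by grind) (fun k ↦ by grind) (hx0 ▸ hx0mem)
    (hz0.trans hx0.symm) hzrec hlam hnz hstep
end
end

section
/- Let s_η ∈ (0,1) and for every integer k ≥ 0 define η_k = 5s_η/(7(k+1)^{5/7}), γ_k = 1/(k+1)^{4/7}, α_k = 1 − (1−γ_k)/(1−η_k), and p_k = (k+1)^{1/7}. Then for all k ≥ 0: α_k ≥ (1 − 5s_η/7)/(k+1)^{4/7} and (1 − α_k)p_{k+1} ≤ (1 − α_k/2)p_k. -/
/-!
With `t = k + 1` and `x = t ^ (1 / 7)` the momentum satisfies `(1 - α) (1 - η) = 1 - γ`, where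
`γ = 1 / x ^ 4` and `η = c / x ^ 5` for `c = 5 s / 7`. The first bound is `α ≥ γ - η ≥ (1 - c) γ`.
For the second one, put `y = (t + 1) ^ (1 / 7)`; clearing denominators leaves
`2 (x ^ 4 - 1) (y - x) ≤ x - c`, a consequence of the tangent bound
`x ^ 4 - 1 ≤ 4 x ^ 3 (x - 1)` and of `8 x ^ 3 (y - x) ≤ 1`. Near `x = 1` Bernoulli's inequality is
too weak for the latter; the quadratic term in the expansion of `y ^ 7` around `x` makes up for
the difference.
-/

section OrderedRing

variable {R : Type*} [CommRing R] [LinearOrder R] [IsStrictOrderedRing R]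

lemma sub_le_of_one_sub_mul_one_sub_eq {α γ η : R} (hη₀ : 0 ≤ η) (hη₁ : η < 1) (hηγ : η ≤ γ)
    (h : (1 - α) * (1 - η) = 1 - γ) : γ - η ≤ α := by
  refine le_of_mul_le_mul_right ?_ (sub_pos.2 hη₁)
  calc (γ - η) * (1 - η) ≤ γ - η :=
        mul_le_of_le_one_right (sub_nonneg.2 hηγ) (sub_le_self 1 hη₀)
    _ = α * (1 - η) := by linear_combination h

lemma two_mul_one_sub_mul_le_of_one_sub_mul_one_sub_eq {α γ η p d : R} (hη : η < 1)
    (h : (1 - α) * (1 - η) = 1 - γ) (hd : 2 * (1 - γ) * d ≤ (γ - η) * p) :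
    2 * (1 - α) * d ≤ α * p := by
  refine le_of_mul_le_mul_right ?_ (sub_pos.2 hη)
  calc 2 * (1 - α) * d * (1 - η) = 2 * (1 - γ) * d := by linear_combination 2 * d * h
    _ ≤ (γ - η) * p := hd
    _ = α * p * (1 - η) := by linear_combination p * h

lemma pow_sub_one_le_mul_pow_mul_sub_one {x : R} (hx : 0 ≤ x) (m : ℕ) :
    x ^ m - 1 ≤ m * x ^ (m - 1) * (x - 1) := by
  have htangent := pow_add_mul_le_add_pow (a := x) (b := 1 - x) hx (by linarith) m
  rw [add_sub_cancel, one_pow] at htangent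
  linarith

lemma two_mul_pow_sub_one_mul_le_sub_one {x d : R} {m : ℕ} (hx : 1 ≤ x) (hd₀ : 0 ≤ d)
    (hd : 2 * m * x ^ (m - 1) * d ≤ 1) : 2 * (x ^ m - 1) * d ≤ x - 1 :=
  calc 2 * (x ^ m - 1) * d ≤ 2 * (m * x ^ (m - 1) * (x - 1)) * d := by
        gcongr
        exact pow_sub_one_le_mul_pow_mul_sub_one (zero_le_one.trans hx) m
    _ = 2 * m * x ^ (m - 1) * d * (x - 1) := by ring
    _ ≤ x - 1 := mul_le_of_le_one_left (sub_nonneg.2 hx) hd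

lemma sum_range_pow_mul_choose_le_add_pow {x d : R} (hx : 0 ≤ x) (hd : 0 ≤ d) {n k : ℕ}
    (hk : k ≤ n + 1) : ∑ i ∈ Finset.range k, d ^ i * x ^ (n - i) * n.choose i ≤ (d + x) ^ n := by
  rw [add_pow]
  exact Finset.sum_le_sum_of_subset_of_nonneg (Finset.range_mono hk) fun i _ _ => by positivity

lemma eight_mul_pow_three_mul_le_one {x d : R} (hx : 1 ≤ x) (hd : 0 ≤ d)
    (h : (d + x) ^ 7 ≤ x ^ 7 + 1) : 8 * x ^ 3 * d ≤ 1 := by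
  have hx₀ : 0 < x := one_pos.trans_le hx
  have hquad : 7 * x ^ 6 * d + 21 * x ^ 5 * d ^ 2 ≤ 1 := by
    refine le_of_add_le_add_left (a := x ^ 7) (le_trans ?_ h)
    calc x ^ 7 + (7 * x ^ 6 * d + 21 * x ^ 5 * d ^ 2)
        = ∑ i ∈ Finset.range 3, d ^ i * x ^ (7 - i) * Nat.choose 7 i := by
          simp [Finset.sum_range_succ, Nat.choose]
          ring
      _ ≤ (d + x) ^ 7 := sum_range_pow_mul_choose_le_add_pow hx₀.le hd (by norm_num)
  by_contra! hlt
  -- Multiplied by `64 * x`, the left side of `hquad` is a polynomial in `x` and `8 * x ^ 3 * d`.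
  have : 64 * x < 64 * x :=
    calc 64 * x ≤ 56 * x ^ 4 + 21 := by
          have hbernoulli := one_add_mul_sub_le_pow (a := x) (by linarith) 4
          push_cast at hbernoulli
          linarith
      _ < 56 * x ^ 4 * (8 * x ^ 3 * d) + 21 * (8 * x ^ 3 * d) ^ 2 :=
          add_lt_add (lt_mul_of_one_lt_right (by positivity) hlt)
            (lt_mul_of_one_lt_right (by norm_num) (one_lt_pow₀ hlt two_ne_zero))
      _ = 64 * x * (7 * x ^ 6 * d + 21 * x ^ 5 * d ^ 2) := by ring
      _ ≤ 64 * x := mul_le_of_le_one_right (by positivity) hquad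
  exact this.false

end OrderedRing

section OrderedField

variable {K : Type*} [Field K] [LinearOrder K] [IsStrictOrderedRing K] {x c : K} {m : ℕ}

lemma div_pow_lt_one (hx : 1 ≤ x) (hc : c < 1) (n : ℕ) : c / x ^ n < 1 :=
  (div_lt_one (by positivity)).2 (hc.trans_le (one_le_pow₀ hx))

lemma one_sub_div_pow_le_of_one_sub_mul_eq {α : K} (hx : 1 ≤ x) (hc₀ : 0 ≤ c) (hc₁ : c < 1)
    (h : (1 - α) * (1 - c / x ^ (m + 1)) = 1 - 1 / x ^ m) : (1 - c) / x ^ m ≤ α := by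
  have hstep : c / x ^ (m + 1) ≤ c / x ^ m := by gcongr; exact m.le_succ
  have hstep_le : c / x ^ (m + 1) ≤ 1 / x ^ m := hstep.trans (by gcongr)
  calc (1 - c) / x ^ m = 1 / x ^ m - c / x ^ m := sub_div ..
    _ ≤ 1 / x ^ m - c / x ^ (m + 1) := by gcongr
    _ ≤ α := sub_le_of_one_sub_mul_one_sub_eq (by positivity) (div_pow_lt_one hx hc₁ _) hstep_le h

lemma two_mul_one_sub_one_div_pow_mul_le {d : K} (hx : 1 ≤ x) (hc : c ≤ 1) (hd₀ : 0 ≤ d)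
    (hd : 2 * m * x ^ (m - 1) * d ≤ 1) :
    2 * (1 - 1 / x ^ m) * d ≤ (1 / x ^ m - c / x ^ (m + 1)) * x := by
  calc 2 * (1 - 1 / x ^ m) * d = 2 * (x ^ m - 1) * d / x ^ m := by field_simp
    _ ≤ (x - c) / x ^ m := by
        gcongr
        linarith [two_mul_pow_sub_one_mul_le_sub_one hx hd₀ hd]
    _ = (1 / x ^ m - c / x ^ (m + 1)) * x := by field_simp; ring

lemma one_sub_mul_le_one_sub_half_mul_of_one_sub_mul_eq {y α : K} (hx : 1 ≤ x) (hc : c < 1)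
    (hxy : x ≤ y) (hd : 2 * m * x ^ (m - 1) * (y - x) ≤ 1)
    (h : (1 - α) * (1 - c / x ^ (m + 1)) = 1 - 1 / x ^ m) :
    (1 - α) * y ≤ (1 - α / 2) * x := by
  have hgain : 2 * (1 - α) * (y - x) ≤ α * x :=
    two_mul_one_sub_mul_le_of_one_sub_mul_one_sub_eq (div_pow_lt_one hx hc _) h
      (two_mul_one_sub_one_div_pow_mul_le hx hc.le (sub_nonneg.2 hxy) hd)
  linarith

end OrderedField

lemma rpow_natCast_div {t : ℝ} (ht : 0 ≤ t) (n m : ℕ) :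
    t ^ ((n : ℝ) / m) = (t ^ ((1 : ℝ) / m)) ^ n := by
  rw [← Real.rpow_mul_natCast ht, one_div_mul_eq_div]

lemma eight_mul_rpow_pow_three_mul_rpow_sub_le_one {t : ℝ} (ht : 1 ≤ t) :
    8 * (t ^ ((1 : ℝ) / 7)) ^ 3 * ((t + 1) ^ ((1 : ℝ) / 7) - t ^ ((1 : ℝ) / 7)) ≤ 1 := by
  have pow_root {u : ℝ} (hu : 0 ≤ u) : (u ^ ((1 : ℝ) / 7)) ^ 7 = u := by
    simpa using Real.rpow_inv_natCast_pow hu (n := 7) (by norm_num)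
  refine eight_mul_pow_three_mul_le_one (Real.one_le_rpow ht (by norm_num)) ?_ ?_
  · exact sub_nonneg.2 (Real.rpow_le_rpow (by linarith) (by linarith) (by norm_num))
  · rw [sub_add_cancel, pow_root (by linarith), pow_root (by linarith)]

theorem stmt11_general {s t η γ α : ℝ} (hs₀ : 0 ≤ s) (hs₁ : s < 7 / 5) (ht : 1 ≤ t)
    (hη : η = 5 * s / (7 * t ^ ((5 : ℝ) / 7))) (hγ : γ = 1 / t ^ ((4 : ℝ) / 7))
    (hα : α = 1 - (1 - γ) / (1 - η)) :
    (1 - 5 * s / 7) / t ^ ((4 : ℝ) / 7) ≤ α ∧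
      (1 - α) * (t + 1) ^ ((1 : ℝ) / 7) ≤ (1 - α / 2) * t ^ ((1 : ℝ) / 7) := by
  have ht₀ : 0 ≤ t := zero_le_one.trans ht
  have hx : 1 ≤ t ^ ((1 : ℝ) / 7) := Real.one_le_rpow ht (by norm_num)
  have hxy : t ^ ((1 : ℝ) / 7) ≤ (t + 1) ^ ((1 : ℝ) / 7) := by gcongr; linarith
  have hinc := eight_mul_rpow_pow_three_mul_rpow_sub_le_one ht
  have hx4 : t ^ ((4 : ℝ) / 7) = (t ^ ((1 : ℝ) / 7)) ^ 4 := mod_cast rpow_natCast_div ht₀ 4 7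
  have hx5 : t ^ ((5 : ℝ) / 7) = (t ^ ((1 : ℝ) / 7)) ^ 5 := mod_cast rpow_natCast_div ht₀ 5 7
  have hc₀ : 0 ≤ 5 * s / 7 := by positivity
  have hc₁ : 5 * s / 7 < 1 := by linarith
  rw [hx4] at hγ ⊢
  rw [hx5, ← div_div] at hη
  generalize t ^ ((1 : ℝ) / 7) = x at *
  have hη₁ : η < 1 := hη ▸ div_pow_lt_one hx hc₁ 5
  have hmul : (1 - α) * (1 - η) = 1 - γ := by
    rw [hα, sub_sub_cancel, div_mul_cancel₀ _ (sub_pos.2 hη₁).ne']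
  rw [hη, hγ] at hmul
  exact ⟨one_sub_div_pow_le_of_one_sub_mul_eq hx hc₀ hc₁ hmul,
    one_sub_mul_le_one_sub_half_mul_of_one_sub_mul_eq hx hc₁ hxy (by norm_num [hinc]) hmul⟩

/-- **Lemma 7**: properties of the stepsize/momentum sequences for SIPM-EM. -/
theorem stmt11 (s : ℝ) (hs0 : 0 < s) (hs1 : s < 1)
    (η γ α p : ℕ → ℝ)
    (hη : ∀ k : ℕ, η k = 5 * s / (7 * ((k : ℝ) + 1) ^ ((5 : ℝ) / 7)))
    (hγ : ∀ k : ℕ, γ k = 1 / ((k : ℝ) + 1) ^ ((4 : ℝ) / 7))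
    (hα : ∀ k : ℕ, α k = 1 - (1 - γ k) / (1 - η k))
    (hp : ∀ k : ℕ, p k = ((k : ℝ) + 1) ^ ((1 : ℝ) / 7)) :
    ∀ k : ℕ,
      (1 - 5 * s / 7) / ((k : ℝ) + 1) ^ ((4 : ℝ) / 7) ≤ α k ∧
      (1 - α k) * p (k + 1) ≤ (1 - α k / 2) * p k := by
  intro k
  rw [hp, hp]
  push_cast
  exact stmt11_general hs0.le (by linarith) (by simp) (hη k) (hγ k) (hα k)
end

section
/- Let s_η ∈ (0,1) and for every integer k ≥ 0 define η_k = s_η/(3(k+1)^{2/3}), γ_k = 1/(k+1)^{2/3}, α_k = 1 − (1−γ_k)/(1−η_k), and p_k = (k+1)^{1/3}. Then for all k ≥ 0: α_k ≥ (1 − s_η/3)/(k+1)^{2/3} and (1 − α_k)p_{k+1} ≤ (1 − α_k/2)p_k. -/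
/-!
Write `η = c * γ`. The momentum weight is then `α = (1 - c) * γ / (1 - c * γ)`, and the lower bound
`(1 - c) * γ ≤ α` holds because the denominator is at most `1`.

For the growth condition, Bernoulli's inequality gives `(t + 1) ^ β ≤ (1 + β / t) * t ^ β`. If
`1 / t ≤ γ` and `2 * β ≤ 1 - c`, the lower bound yields `β / t ≤ α / 2`, so it suffices that
`(1 - α) * (1 + α / 2) ≤ 1 - α / 2`. The theorem is the case `c = s / 3`, `β = 1 / 3`, `t = k + 1`,
where the condition on `c` and `β` becomes `s ≤ 1`.
-/

/-- The momentum weight `α` of SIPM-RM as a function of `γ`, with the step size written as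
`η = c * γ`; in the paper `c = s_η / 3`. -/
noncomputable def momentumWeight (c γ : ℝ) : ℝ :=
  1 - (1 - γ) / (1 - c * γ)

section MomentumWeight

variable {c γ : ℝ}

lemma momentumWeight_eq_div (h : c * γ ≠ 1) :
    momentumWeight c γ = (1 - c) * γ / (1 - c * γ) := by
  have hne : 1 - c * γ ≠ 0 := sub_ne_zero.mpr h.symm
  rw [momentumWeight, one_sub_div hne]
  ring

lemma mul_le_momentumWeight (hc₀ : 0 ≤ c) (hc₁ : c ≤ 1) (hγ : 0 ≤ γ) (h : c * γ < 1) :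
    (1 - c) * γ ≤ momentumWeight c γ := by
  rw [momentumWeight_eq_div h.ne]
  have hnum : 0 ≤ (1 - c) * γ := mul_nonneg (sub_nonneg.mpr hc₁) hγ
  have hden : 1 - c * γ ≤ 1 := sub_le_self 1 (mul_nonneg hc₀ hγ)
  exact le_div_self hnum (sub_pos.mpr h) hden

lemma momentumWeight_le_one (hγ : γ ≤ 1) (h : c * γ ≤ 1) : momentumWeight c γ ≤ 1 :=
  sub_le_self 1 (div_nonneg (sub_nonneg.mpr hγ) (sub_nonneg.mpr h))

end MomentumWeight

section PowerGrowth

variable {α β t : ℝ}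

lemma one_div_le_one_div_rpow (ht : 1 ≤ t) (hβ : β ≤ 1) : 1 / t ≤ 1 / t ^ β :=
  one_div_le_one_div_of_le (by positivity) (Real.rpow_le_self_of_one_le ht hβ)

lemma one_div_rpow_le_one (ht : 1 ≤ t) (hβ : 0 ≤ β) : 1 / t ^ β ≤ 1 :=
  div_le_one_of_le₀ (Real.one_le_rpow ht hβ) (by positivity)

lemma add_one_rpow_le_one_add_div_mul_rpow (hβ₀ : 0 ≤ β) (hβ₁ : β ≤ 1) (ht : 0 < t) :
    (t + 1) ^ β ≤ (1 + β / t) * t ^ β := by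
  have bernoulli : (1 + t⁻¹) ^ β ≤ 1 + β * t⁻¹ :=
    rpow_one_add_le_one_add_mul_self (by linarith [inv_pos.mpr ht]) hβ₀ hβ₁
  calc (t + 1) ^ β = ((1 + t⁻¹) * t) ^ β := by rw [add_mul, one_mul, inv_mul_cancel₀ ht.ne']
    _ = (1 + t⁻¹) ^ β * t ^ β := Real.mul_rpow (by positivity) ht.le
    _ ≤ (1 + β / t) * t ^ β := by rw [div_eq_mul_inv]; gcongr

lemma one_sub_mul_add_one_rpow_le (hβ₀ : 0 ≤ β) (hβ₁ : β ≤ 1) (ht : 0 < t)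
    (hα : 2 * β / t ≤ α) (hα₁ : α ≤ 1) :
    (1 - α) * (t + 1) ^ β ≤ (1 - α / 2) * t ^ β := by
  have hsub : 0 ≤ 1 - α := sub_nonneg.mpr hα₁
  have hβt : β / t ≤ α / 2 := by rw [mul_div_assoc] at hα; linarith
  calc (1 - α) * (t + 1) ^ β ≤ (1 - α) * ((1 + α / 2) * t ^ β) := by
        grw [add_one_rpow_le_one_add_div_mul_rpow hβ₀ hβ₁ ht, hβt]
    _ = (1 - α) * (1 + α / 2) * t ^ β := (mul_assoc _ _ _).symm
    _ ≤ (1 - α / 2) * t ^ β := by gcongr; linarith [sq_nonneg α]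

end PowerGrowth

theorem stmt15_general {c β γ t : ℝ} (hc : 0 ≤ c) (hβ : 0 < β) (hcβ : c + 2 * β ≤ 1) (ht : 0 < t)
    (hγt : 1 / t ≤ γ) (hγ₁ : γ ≤ 1) :
    (1 - c) * γ ≤ momentumWeight c γ ∧
      (1 - momentumWeight c γ) * (t + 1) ^ β ≤ (1 - momentumWeight c γ / 2) * t ^ β := by
  have hc₁ : c < 1 := by linarith
  have hγ₀ : 0 ≤ γ := (one_div_pos.mpr ht).le.trans hγt
  have hcγ : c * γ < 1 := mul_lt_one_of_nonneg_of_lt_one_left hc hc₁ hγ₁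
  have lower : (1 - c) * γ ≤ momentumWeight c γ := mul_le_momentumWeight hc hc₁.le hγ₀ hcγ
  have hβt : 2 * β / t ≤ momentumWeight c γ :=
    calc 2 * β / t = 2 * β * (1 / t) := (mul_one_div _ _).symm
      _ ≤ (1 - c) * γ := by gcongr; linarith
      _ ≤ momentumWeight c γ := lower
  exact ⟨lower, one_sub_mul_add_one_rpow_le hβ.le (by linarith) ht hβt
    (momentumWeight_le_one hγ₁ hcγ.le)⟩

/-- **Lemma 9**: properties of the stepsize/momentum sequences for SIPM-RM. -/
theorem stmt15 (s : ℝ) (hs0 : 0 < s) (hs1 : s < 1)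
    (η γ α p : ℕ → ℝ)
    (hη : ∀ k : ℕ, η k = s / (3 * ((k : ℝ) + 1) ^ ((2 : ℝ) / 3)))
    (hγ : ∀ k : ℕ, γ k = 1 / ((k : ℝ) + 1) ^ ((2 : ℝ) / 3))
    (hα : ∀ k : ℕ, α k = 1 - (1 - γ k) / (1 - η k))
    (hp : ∀ k : ℕ, p k = ((k : ℝ) + 1) ^ ((1 : ℝ) / 3)) :
    ∀ k : ℕ,
      (1 - s / 3) / ((k : ℝ) + 1) ^ ((2 : ℝ) / 3) ≤ α k ∧
      (1 - α k) * p (k + 1) ≤ (1 - α k / 2) * p k := by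
  intro k
  have ht : (1 : ℝ) ≤ k + 1 := le_add_of_nonneg_left k.cast_nonneg
  simpa only [momentumWeight, hα, hη, hγ, hp, Nat.cast_succ, mul_one_div, div_div] using
    stmt15_general (c := s / 3) (β := 1 / 3) (by positivity) (by norm_num) (by linarith)
      (by positivity) (one_div_le_one_div_rpow ht (by norm_num))
      (one_div_rpow_le_one ht (by norm_num))
end

section
/- Let β ∈ (0,1) and u ∈ (0, 1/e). Then for every real v ≥ ((1/u)·ln(1/u))^{1/β} it holds that v^{−β}·ln v ≤ 2u/β. -/
/-!
Put `w = v ^ β`. The threshold on `v` says exactly that `log (1 / u) ≤ u * w`, while `log x ≤ x - 1`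
at `x = u * w` gives `log w ≤ log (1 / u) + u * w - 1`. Adding the two, `β * log v = log w` is at
most `2 * u * w`.
-/

theorem log_le_two_mul_sub_one_of_neg_log_le {u w : ℝ} (hu : 0 < u) (hw : 0 < w)
    (h : -Real.log u ≤ u * w) : Real.log w ≤ 2 * (u * w) - 1 := by
  have tangent : Real.log u + Real.log w ≤ u * w - 1 := by
    rw [← Real.log_mul hu.ne' hw.ne']
    exact Real.log_le_sub_one_of_pos (mul_pos hu hw)
  linarith

theorem rpow_neg_mul_log_le_of_neg_log_le {β u v : ℝ} (hβ : 0 < β) (hu : 0 < u) (hv : 0 < v)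
    (h : -Real.log u ≤ u * v ^ β) : v ^ (-β) * Real.log v ≤ 2 * u / β := by
  have hw : 0 < v ^ β := Real.rpow_pos_of_pos hv β
  have hlog : β * Real.log v ≤ 2 * u * v ^ β := by
    have := log_le_two_mul_sub_one_of_neg_log_le hu hw h
    rw [Real.log_rpow hv] at this
    linarith
  calc v ^ (-β) * Real.log v = β * Real.log v / v ^ β / β := by
        rw [Real.rpow_neg hv.le]
        field_simp
    _ ≤ 2 * u / β := by
        gcongr
        exact (div_le_iff₀ hw).2 hlog

theorem stmt19_general {β u v : ℝ} (hβ : 0 < β) (hu0 : 0 < u) (hu1 : u < 1)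
    (hv : (1 / u * Real.log (1 / u)) ^ ((1 : ℝ) / β) ≤ v) :
    v ^ (-β) * Real.log v ≤ 2 * u / β := by
  have threshold_pos : 0 < 1 / u * Real.log (1 / u) :=
    mul_pos (one_div_pos.2 hu0) (Real.log_pos (one_lt_one_div hu0 hu1))
  have hv0 : 0 < v := (Real.rpow_pos_of_pos threshold_pos _).trans_le hv
  have threshold_le : 1 / u * Real.log (1 / u) ≤ v ^ β := by
    rwa [one_div β, Real.rpow_inv_le_iff_of_pos threshold_pos.le hv0.le hβ] at hv
  refine rpow_neg_mul_log_le_of_neg_log_le hβ hu0 hv0 ?_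
  rwa [one_div, Real.log_inv, inv_mul_le_iff₀ hu0] at threshold_le

/-- **Lemma 12**: a polylogarithmic threshold estimate. -/
theorem stmt19 (β u : ℝ) (hβ0 : 0 < β) (hβ1 : β < 1)
    (hu0 : 0 < u) (hu1 : u < 1 / Real.exp 1) :
    ∀ v : ℝ, (1 / u * Real.log (1 / u)) ^ ((1 : ℝ) / β) ≤ v →
      v ^ (-β) * Real.log v ≤ 2 * u / β := fun _ hv ↦
  have inv_exp_lt_one : 1 / Real.exp 1 < 1 := (div_lt_one (Real.exp_pos 1)).2 (by simp)
  stmt19_general hβ0 hu0 (hu1.trans inv_exp_lt_one) hv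
end
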